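/- Let X be a finite set of points in ℝ^d, let dist : X × X → ℝ₊ be a function, let k ≤ |X|, and for each j let d*_j denote the maximum spacing over all partitions of X into j+1 nonempty groups induced by the leaves of a standard axis-aligned decision tree with j+1 leaves. Let L₀ = {X}, and for i = 0,...,k−2 let L_{i+1} be obtained from L_i by choosing a group ℓ ∈ L_i and an axis-aligned cut γ splitting the points of ℓ into two nonempty sets so that the resulting partition has spacing at least as large as that obtained by any other choice of group in L_i and axis-aligned cut (the greedy MaxSpacing step). Then for every 1 ≤ i ≤ k−1, sp(L_i) = d*_i; i.e., the greedy algorithm produces, for every i, a partition of maximum spacing among all explainable partitions of X with i+1 groups. -/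

import Mathlib

open Finset
open scoped Classical

/-- A standard (axis-aligned) decision tree over `ℝ^d`: each internal node is labeled
by a coordinate and a threshold. -/
inductive DTree (d : ℕ) where
  | leaf : DTree d
  | node (i : Fin d) (θ : ℝ) (l r : DTree d) : DTree d

/-- The cells (regions of `ℝ^d`) associated with the leaves of a decision tree:
a point reaching a node goes left if its labeled coordinate is `≤` the threshold,
and right otherwise. -/
def DTree.cells {d : ℕ} : DTree d → List (Set (Fin d → ℝ))
  | .leaf => [Set.univ]
  | .node i θ l r =>
      (l.cells.map fun c => {x : Fin d → ℝ | x i ≤ θ} ∩ c) ++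
      (r.cells.map fun c => {x : Fin d → ℝ | θ < x i} ∩ c)

/-- The groups of points of `X` reaching each leaf of the tree `t`. -/
noncomputable def inducedGroups {d : ℕ} (X : Finset (Fin d → ℝ)) (t : DTree d) :
    List (Finset (Fin d → ℝ)) :=
  t.cells.map fun c => X.filter (· ∈ c)

/-- `P` is a partition of `X` into `m` nonempty groups induced by the leaves of a
standard axis-aligned decision tree with `m` leaves (an explainable partition). -/
noncomputable def IsExplainablePartition {d : ℕ} (X : Finset (Fin d → ℝ)) (m : ℕ)
    (P : Finset (Finset (Fin d → ℝ))) : Prop :=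
  ∃ t : DTree d, t.cells.length = m ∧ (∀ s ∈ inducedGroups X t, s.Nonempty) ∧
    P = (inducedGroups X t).toFinset

/-- The spacing of a partition `P` with respect to a distance function `dist`. -/
noncomputable def spacing {α : Type*} (dist : α → α → ℝ) (P : Finset (Finset α)) : ℝ :=
  sInf {r : ℝ | ∃ s ∈ P, ∃ s' ∈ P, s ≠ s' ∧ ∃ x ∈ s, ∃ y ∈ s', r = dist x y}

/-- The maximum spacing over all explainable partitions of `X` into `m` nonempty groups. -/
noncomputable def maxSpacing {d : ℕ} (X : Finset (Fin d → ℝ))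
    (dist : (Fin d → ℝ) → (Fin d → ℝ) → ℝ) (m : ℕ) : ℝ :=
  sSup {r : ℝ | ∃ P : Finset (Finset (Fin d → ℝ)),
    IsExplainablePartition X m P ∧ r = spacing dist P}

/-- `L'` is obtained from `L` by splitting one of its groups with an axis-aligned cut
into two nonempty parts. -/
noncomputable def IsSplitOf {d : ℕ} (L L' : Finset (Finset (Fin d → ℝ))) : Prop :=
  ∃ ℓ ∈ L, ∃ c : Fin d, ∃ θ : ℝ,
    (ℓ.filter fun x => x c ≤ θ).Nonempty ∧
    (ℓ.filter fun x => θ < x c).Nonempty ∧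
    L' = insert (ℓ.filter fun x => x c ≤ θ)
          (insert (ℓ.filter fun x => θ < x c) (L.erase ℓ))

lemma DTree.exists_cell {d : ℕ} (t : DTree d) (x : Fin d → ℝ) : ∃ c ∈ t.cells, x ∈ c := by
  induction t with
  | leaf => exact ⟨Set.univ, by simp [DTree.cells], trivial⟩
  | node i θ l r ihl ihr =>
    rcases le_or_gt (x i) θ with h | h
    · obtain ⟨c, hc, hx⟩ := ihl
      exact ⟨_, List.mem_append_left _ (List.mem_map_of_mem hc), h, hx⟩
    · obtain ⟨c, hc, hx⟩ := ihr
      exact ⟨_, List.mem_append_right _ (List.mem_map_of_mem hc), h, hx⟩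

lemma DTree.pairwise_cells {d : ℕ} (t : DTree d) :
    t.cells.Pairwise (fun c c' => ∀ x, x ∈ c → x ∈ c' → False) := by
  induction t with
  | leaf => simp [DTree.cells]
  | node i θ l r ihl ihr =>
    rw [DTree.cells, List.pairwise_append]
    refine ⟨?_, ?_, ?_⟩
    · rw [List.pairwise_map]
      exact ihl.imp fun h x hx hy => h x hx.2 hy.2
    · rw [List.pairwise_map]
      exact ihr.imp fun h x hx hy => h x hx.2 hy.2
    · intro a ha b hb x hxa hxb
      obtain ⟨a', _, rfl⟩ := List.mem_map.1 ha
      obtain ⟨b', _, rfl⟩ := List.mem_map.1 hb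
      have h1 : x i ≤ θ := hxa.1
      have h2 : θ < x i := hxb.1
      exact absurd h1 (not_le.2 h2)

lemma DTree.cell_unique {d : ℕ} (t : DTree d) {c c' : Set (Fin d → ℝ)} (hc : c ∈ t.cells)
    (hc' : c' ∈ t.cells) {x : Fin d → ℝ} (hx : x ∈ c) (hx' : x ∈ c') : c = c' := by
  by_contra hne
  have : Std.Symm (fun c c' : Set (Fin d → ℝ) => ∀ x, x ∈ c → x ∈ c' → False) :=
    ⟨fun _ _ h x h1 h2 => h x h2 h1⟩
  exact t.pairwise_cells.forall hc hc' hne x hx hx'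

lemma DTree.groups_nodup {d : ℕ} (X : Finset (Fin d → ℝ)) (t : DTree d)
    (h : ∀ s ∈ inducedGroups X t, s.Nonempty) : (inducedGroups X t).Nodup := by
  unfold inducedGroups at *
  unfold List.Nodup
  rw [List.pairwise_map]
  refine t.pairwise_cells.imp_of_mem ?_
  intro a b ha hb hab heq
  obtain ⟨x, hx⟩ := h _ (List.mem_map_of_mem ha)
  have hx2 := hx
  rw [heq] at hx2
  exact hab x (Finset.mem_filter.1 hx).2 (Finset.mem_filter.1 hx2).2

lemma DTree.exists_cut {d : ℕ} (t : DTree d) (ℓ : Finset (Fin d → ℝ))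
    (h : ∀ c ∈ t.cells, ∃ x ∈ ℓ, x ∉ c) :
    ∃ i : Fin d, ∃ θ : ℝ, (∃ x ∈ ℓ, x i ≤ θ) ∧ (∃ x ∈ ℓ, θ < x i) ∧
      ∀ x ∈ ℓ, ∀ y ∈ ℓ, x i ≤ θ → θ < y i → ∀ c ∈ t.cells, x ∈ c → y ∈ c → False := by
  induction t with
  | leaf => obtain ⟨x, _, hx⟩ := h Set.univ (by simp [DTree.cells]); exact absurd trivial hx
  | node i θ l r ihl ihr =>
    by_cases h1 : ∃ x ∈ ℓ, x i ≤ θ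
    · by_cases h2 : ∃ x ∈ ℓ, θ < x i
      · refine ⟨i, θ, h1, h2, ?_⟩
        intro x _ y _ hxθ hyθ c hc hxc hyc
        rw [DTree.cells, List.mem_append] at hc
        rcases hc with hc | hc
        · obtain ⟨a, _, rfl⟩ := List.mem_map.1 hc
          exact absurd hyc.1 (not_le.2 hyθ)
        · obtain ⟨a, _, rfl⟩ := List.mem_map.1 hc
          exact absurd hxc.1 (not_lt.2 hxθ)
      · push Not at h2
        obtain ⟨j, η, ha, hb, hs⟩ := ihl (by
          intro c hc
          obtain ⟨x, hx, hxc⟩ := h _ (List.mem_append_left _ (List.mem_map_of_mem hc))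
          exact ⟨x, hx, fun hh => hxc ⟨h2 x hx, hh⟩⟩)
        refine ⟨j, η, ha, hb, ?_⟩
        intro x hx y hy hxθ hyθ c hc hxc hyc
        rw [DTree.cells, List.mem_append] at hc
        rcases hc with hc | hc
        · obtain ⟨a, haa, rfl⟩ := List.mem_map.1 hc
          exact hs x hx y hy hxθ hyθ a haa hxc.2 hyc.2
        · obtain ⟨a, _, rfl⟩ := List.mem_map.1 hc
          exact absurd hxc.1 (not_lt.2 (h2 x hx))
    · push Not at h1
      obtain ⟨j, η, ha, hb, hs⟩ := ihr (by
        intro c hc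
        obtain ⟨x, hx, hxc⟩ := h _ (List.mem_append_right _ (List.mem_map_of_mem hc))
        exact ⟨x, hx, fun hh => hxc ⟨h1 x hx, hh⟩⟩)
      refine ⟨j, η, ha, hb, ?_⟩
      intro x hx y hy hxθ hyθ c hc hxc hyc
      rw [DTree.cells, List.mem_append] at hc
      rcases hc with hc | hc
      · obtain ⟨a, _, rfl⟩ := List.mem_map.1 hc
        exact absurd hxc.1 (not_le.2 (h1 x hx))
      · obtain ⟨a, haa, rfl⟩ := List.mem_map.1 hc
        exact hs x hx y hy hxθ hyθ a haa hxc.2 hyc.2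

lemma DTree.exists_refine {d : ℕ} (t : DTree d) (j : Fin d) (η : ℝ) (c : Set (Fin d → ℝ))
    (hc : c ∈ t.cells) : ∃ A B, t.cells = A ++ c :: B ∧ ∃ t' : DTree d,
      t'.cells = A ++ ({x | x j ≤ η} ∩ c) :: ({x | η < x j} ∩ c) :: B := by
  induction t generalizing c with
  | leaf =>
    simp only [DTree.cells, List.mem_singleton] at hc
    subst hc
    exact ⟨[], [], rfl, .node j η .leaf .leaf, rfl⟩
  | node i θ l r ihl ihr =>
    rw [DTree.cells, List.mem_append] at hc
    rcases hc with hc | hc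
    · obtain ⟨a, ha, rfl⟩ := List.mem_map.1 hc
      obtain ⟨A, B, hAB, t', ht'⟩ := ihl a ha
      refine ⟨A.map (fun c => {x : Fin d → ℝ | x i ≤ θ} ∩ c),
        B.map (fun c => {x : Fin d → ℝ | x i ≤ θ} ∩ c) ++
          r.cells.map (fun c => {x : Fin d → ℝ | θ < x i} ∩ c), ?_, .node i θ t' r, ?_⟩
      rotate_left
      · rw [DTree.cells, ht']
        simp only [List.map_append, List.map_cons, List.append_assoc, List.cons_append]
        rw [Set.inter_left_comm, Set.inter_left_comm {x : Fin d → ℝ | x i ≤ θ} {x | η < x j}]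
      · rw [DTree.cells, hAB]
        simp
    · obtain ⟨a, ha, rfl⟩ := List.mem_map.1 hc
      obtain ⟨A, B, hAB, t', ht'⟩ := ihr a ha
      refine ⟨l.cells.map (fun c => {x : Fin d → ℝ | x i ≤ θ} ∩ c) ++
        A.map (fun c => {x : Fin d → ℝ | θ < x i} ∩ c),
        B.map (fun c => {x : Fin d → ℝ | θ < x i} ∩ c), ?_, .node i θ l t', ?_⟩
      rotate_left
      · rw [DTree.cells, ht']
        simp only [List.map_append, List.map_cons, ← List.append_assoc]
        rw [Set.inter_left_comm, Set.inter_left_comm {x : Fin d → ℝ | θ < x i} {x | η < x j}]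
      · rw [DTree.cells, hAB]
        simp

lemma IsExplainablePartition.split {d : ℕ} {X : Finset (Fin d → ℝ)} {m : ℕ}
    {L L' : Finset (Finset (Fin d → ℝ))} (h : IsExplainablePartition X m L)
    (hs : IsSplitOf L L') : IsExplainablePartition X (m + 1) L' := by
  obtain ⟨t, hm, hne, rfl⟩ := h
  obtain ⟨ℓ, hℓ, j, η, h1, h2, rfl⟩ := hs
  have hnd := DTree.groups_nodup X t hne
  rw [List.mem_toFinset, inducedGroups] at hℓ
  obtain ⟨c, hc, rfl⟩ := List.mem_map.1 hℓ
  obtain ⟨A, B, hAB, t', ht'⟩ := t.exists_refine j η c hc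
  have e1 : ∀ inst : DecidablePred (· ∈ ({x : Fin d → ℝ | x j ≤ η} ∩ c)),
      @Finset.filter _ (· ∈ ({x : Fin d → ℝ | x j ≤ η} ∩ c)) inst X =
      (X.filter (· ∈ c)).filter (fun x => x j ≤ η) := by
    intro inst
    ext x; simp only [Finset.mem_filter, Set.mem_inter_iff, Set.mem_ofPred_eq]; tauto
  have e2 : ∀ inst : DecidablePred (· ∈ ({x : Fin d → ℝ | η < x j} ∩ c)),
      @Finset.filter _ (· ∈ ({x : Fin d → ℝ | η < x j} ∩ c)) inst X =
      (X.filter (· ∈ c)).filter (fun x => η < x j) := by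
    intro inst
    ext x; simp only [Finset.mem_filter, Set.mem_inter_iff, Set.mem_ofPred_eq]; tauto
  unfold inducedGroups at *
  refine ⟨t', ?_, ?_, ?_⟩
  · rw [ht', ← hm, hAB]; simp; omega
  · unfold inducedGroups
    rw [ht']
    rw [hAB] at hne
    simp only [List.map_append, List.map_cons, e1, e2]
    intro s hs
    rw [List.mem_append, List.mem_cons, List.mem_cons] at hs
    rcases hs with hs | rfl | rfl | hs
    · exact hne s (by rw [List.map_append]; exact List.mem_append_left _ hs)
    · exact h1
    · exact h2
    · exact hne s (by
        rw [List.map_append]; exact List.mem_append_right _ (List.mem_cons_of_mem _ hs))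
  · unfold inducedGroups
    rw [ht']
    rw [hAB] at hnd ⊢
    simp only [List.map_append, List.map_cons, e1, e2] at hnd ⊢
    rw [List.nodup_middle, List.nodup_cons] at hnd
    have hn := hnd.1
    ext s
    simp only [Finset.mem_insert, Finset.mem_erase, List.mem_toFinset, List.mem_append,
      List.mem_cons] at hn ⊢
    constructor
    · rintro (h | h | ⟨h, h' | h' | h'⟩) <;> tauto
    · rintro (h | h | h | h)
      · exact Or.inr (Or.inr ⟨fun e => hn (Or.inl (e ▸ h)), Or.inl h⟩)
      · exact Or.inl h
      · exact Or.inr (Or.inl h)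
      · exact Or.inr (Or.inr ⟨fun e => hn (Or.inr (e ▸ h)), Or.inr (Or.inr h)⟩)

lemma spacing_le {α : Type*} (dist : α → α → ℝ) (hdist : ∀ x y, 0 ≤ dist x y)
    (P : Finset (Finset α)) {s s' : Finset α} (hs : s ∈ P) (hs' : s' ∈ P) (hne : s ≠ s')
    {x y : α} (hx : x ∈ s) (hy : y ∈ s') : spacing dist P ≤ dist x y := by
  refine csInf_le ⟨0, ?_⟩ ⟨s, hs, s', hs', hne, x, hx, y, hy, rfl⟩
  rintro r ⟨_, _, _, _, _, _, _, _, _, rfl⟩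
  exact hdist _ _

/-- One greedy step is possible keeping spacing at least that of `P`. -/
lemma exists_good_split {d : ℕ} (X : Finset (Fin d → ℝ))
    (dist : (Fin d → ℝ) → (Fin d → ℝ) → ℝ) (hdist : ∀ x y, 0 ≤ dist x y)
    {n m : ℕ} (hnm : n < m) {L P : Finset (Finset (Fin d → ℝ))}
    (hL : IsExplainablePartition X n L) (hP : IsExplainablePartition X m P)
    (hsep : ∀ s ∈ L, ∀ s' ∈ L, s ≠ s' → ∀ x ∈ s, ∀ y ∈ s', spacing dist P ≤ dist x y) :
    ∃ L'', IsSplitOf L L'' ∧ spacing dist P ≤ spacing dist L'' := by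
  obtain ⟨t, hm, hne, hPe⟩ := hP
  obtain ⟨u, hn, hune, hLe⟩ := hL
  have hLX : ∀ s ∈ L, s ⊆ X := by
    intro s hs
    rw [hLe, List.mem_toFinset, inducedGroups] at hs
    obtain ⟨c, _, rfl⟩ := List.mem_map.1 hs
    exact Finset.filter_subset _ _
  have hPsep : ∀ x ∈ X, ∀ y ∈ X, (∀ c ∈ t.cells, x ∈ c → y ∈ c → False) →
      spacing dist P ≤ dist x y := by
    intro x hx y hy hxy
    obtain ⟨c, hc, hxc⟩ := t.exists_cell x
    obtain ⟨c', hc', hyc⟩ := t.exists_cell y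
    have m1 : X.filter (· ∈ c) ∈ P := by
      rw [hPe, List.mem_toFinset]; exact List.mem_map_of_mem hc
    have m2 : X.filter (· ∈ c') ∈ P := by
      rw [hPe, List.mem_toFinset]; exact List.mem_map_of_mem hc'
    have y2 : y ∈ X.filter (· ∈ c') := Finset.mem_filter.2 ⟨hy, hyc⟩
    refine spacing_le dist hdist P m1 m2 ?_ (Finset.mem_filter.2 ⟨hx, hxc⟩) y2
    intro e
    rw [← e] at y2
    exact hxy c hc hxc (Finset.mem_filter.1 y2).2
  have hex : ∃ ℓ ∈ L, ∀ c ∈ t.cells, ∃ x ∈ ℓ, x ∉ c := by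
    by_contra hcon
    push Not at hcon
    choose! f hf using hcon
    have hsub : P ⊆ L.image (fun ℓ => X.filter (· ∈ f ℓ)) := by
      intro s hs
      rw [hPe, List.mem_toFinset] at hs
      obtain ⟨x, hx⟩ := hne s hs
      rw [inducedGroups] at hs
      obtain ⟨c, hc, rfl⟩ := List.mem_map.1 hs
      have hx' := Finset.mem_filter.1 hx
      obtain ⟨b, hb, hxb⟩ := u.exists_cell x
      have hbL : X.filter (· ∈ b) ∈ L := by
        rw [hLe, List.mem_toFinset]; exact List.mem_map_of_mem hb
      refine Finset.mem_image.2 ⟨_, hbL, ?_⟩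
      have := hf _ hbL
      have := t.cell_unique this.1 hc (this.2 x (Finset.mem_filter.2 ⟨hx'.1, hxb⟩)) hx'.2
      simp only [this]
    have c1 := (Finset.card_le_card hsub).trans Finset.card_image_le
    have c2 : P.card = m := by
      rw [hPe, List.toFinset_card_of_nodup (DTree.groups_nodup X t hne), ← hm]
      simp [inducedGroups]
    have c3 : L.card ≤ n := by
      rw [hLe, ← hn]
      refine (List.toFinset_card_le _).trans ?_
      simp [inducedGroups]
    omega
  obtain ⟨ℓ, hℓ, hcut⟩ := hex
  obtain ⟨j, η, ⟨a, ha, haη⟩, ⟨b, hb, hbη⟩, hs⟩ := t.exists_cut ℓ hcut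
  have ha' : a ∈ ℓ.filter (fun x => x j ≤ η) := Finset.mem_filter.2 ⟨ha, haη⟩
  have hb' : b ∈ ℓ.filter (fun x => η < x j) := Finset.mem_filter.2 ⟨hb, hbη⟩
  refine ⟨_, ⟨ℓ, hℓ, j, η, ⟨a, ha'⟩, ⟨b, hb'⟩, rfl⟩, ?_⟩
  refine le_csInf ?_ ?_
  · refine ⟨_, _, Finset.mem_insert_self _ _, _,
      Finset.mem_insert_of_mem (Finset.mem_insert_self _ _), ?_, a, ha', b, hb', rfl⟩
    intro e
    rw [e] at ha'
    exact absurd (Finset.mem_filter.1 ha').2 (not_lt.2 haη)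
  · rintro r ⟨s, hs1, s', hs2, hss, x, hx, y, hy, rfl⟩
    simp only [Finset.mem_insert, Finset.mem_erase] at hs1 hs2
    have hX := hLX ℓ hℓ
    rcases hs1 with rfl | rfl | ⟨n1, hs1⟩ <;> rcases hs2 with rfl | rfl | ⟨n2, hs2⟩
    · exact absurd rfl hss
    · rw [Finset.mem_filter] at hx hy
      exact hPsep x (hX hx.1) y (hX hy.1) (hs x hx.1 y hy.1 hx.2 hy.2)
    · exact hsep ℓ hℓ s' hs2 n2.symm x (Finset.mem_filter.1 hx).1 y hy
    · rw [Finset.mem_filter] at hx hy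
      exact hPsep x (hX hx.1) y (hX hy.1)
        (fun c hc h1 h2 => hs y hy.1 x hx.1 hy.2 hx.2 c hc h2 h1)
    · exact absurd rfl hss
    · exact hsep ℓ hℓ s' hs2 n2.symm x (Finset.mem_filter.1 hx).1 y hy
    · exact hsep s hs1 ℓ hℓ n1 x hx y (Finset.mem_filter.1 hy).1
    · exact hsep s hs1 ℓ hℓ n1 x hx y (Finset.mem_filter.1 hy).1
    · exact hsep s hs1 s' hs2 hss x hx y hy

theorem stmt_17 {d : ℕ} (X : Finset (Fin d → ℝ))
    (dist : (Fin d → ℝ) → (Fin d → ℝ) → ℝ) (hdist : ∀ x y, 0 ≤ dist x y)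
    (k : ℕ) (hk : k ≤ X.card)
    (L : ℕ → Finset (Finset (Fin d → ℝ)))
    (hL0 : L 0 = {X}) (hX : X.Nonempty)
    (hgreedy : ∀ i : ℕ, i + 2 ≤ k →
      IsSplitOf (L i) (L (i + 1)) ∧
      ∀ L'' : Finset (Finset (Fin d → ℝ)),
        IsSplitOf (L i) L'' → spacing dist L'' ≤ spacing dist (L (i + 1))) :
    ∀ i : ℕ, 1 ≤ i → i + 1 ≤ k → spacing dist (L i) = maxSpacing X dist (i + 1) := by
  have hexp : ∀ i : ℕ, i + 1 ≤ max k 1 → IsExplainablePartition X (i + 1) (L i) := by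
    intro i
    induction i with
    | zero =>
      intro _
      refine ⟨.leaf, rfl, ?_, ?_⟩
      · simpa [inducedGroups, DTree.cells] using hX
      · rw [hL0]; simp [inducedGroups, DTree.cells]
    | succ i ih =>
      intro hi
      exact (ih (by omega)).split (hgreedy i (by omega)).1
  have hle : ∀ i : ℕ, i + 2 ≤ k → ∀ m, i + 2 ≤ m → ∀ P, IsExplainablePartition X m P →
      spacing dist P ≤ spacing dist (L (i + 1)) := by
    intro i
    induction i with
    | zero =>
      intro hi m hm P hP
      obtain ⟨L'', h1, h2⟩ := exists_good_split X dist hdist (n := 0 + 1) (by omega)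
        (hexp 0 (by omega)) hP (by
          intro s hs s' hs' hne
          rw [hL0, Finset.mem_singleton] at hs hs'
          exact absurd (hs.trans hs'.symm) hne)
      exact h2.trans ((hgreedy 0 hi).2 L'' h1)
    | succ i ih =>
      intro hi m hm P hP
      have := ih (by omega) m (by omega) P hP
      obtain ⟨L'', h1, h2⟩ := exists_good_split X dist hdist (n := i + 1 + 1) (by omega)
        (hexp (i + 1) (by omega)) hP (by
          intro s hs s' hs' hne x hx y hy
          exact this.trans (spacing_le dist hdist _ hs hs' hne hx hy))
      exact h2.trans ((hgreedy (i + 1) hi).2 L'' h1)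
  intro i hi hik
  obtain ⟨i, rfl⟩ : ∃ j, i = j + 1 := ⟨i - 1, by omega⟩
  symm
  refine IsGreatest.csSup_eq ⟨⟨L (i + 1), hexp _ (by omega), rfl⟩, ?_⟩
  rintro r ⟨P, hP, rfl⟩
  exact hle i hik _ le_rfl P hP
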